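/- Let G be a finite Frobenius group with Frobenius kernel K and cyclic Frobenius complement H. Then G has perfect order classes if, and only if, one of the following holds: (1) K is a nontrivial cyclic p-group for some odd prime p with p = 1 + |H|, and |H| is an even positive integer of the form 2^a·3^b; or (2) G is isomorphic to one of the semidirect products C_{3^k}^2 ⋊ C_8, C_{5^k}^2 ⋊ C_{24}, C_{7^k}^2 ⋊ C_{48}, or C_{17^k}^2 ⋊ C_{288} (each with fixed-point-free action), for some positive integer k. -/

import Mathlib

/-- The number of elements of order `n` in the group `G`. -/
noncomputable def orderCount (G : Type*) [Group G] (n : ℕ) : ℕ :=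
  Nat.card {g : G // orderOf g = n}

/-- A group has *perfect order classes* if, for every positive integer `n`, the number of
elements of order `n` is either zero or a divisor of the order of the group. -/
def PerfectOrderClasses (G : Type*) [Group G] : Prop :=
  ∀ n : ℕ, 0 < n → orderCount G n = 0 ∨ orderCount G n ∣ Nat.card G

/-- `G` is a Frobenius group with Frobenius kernel `K` and Frobenius complement `H`:
`K` is a nontrivial proper normal subgroup, `H` a subgroup with `K ⊓ H = ⊥` and `KH = G`,
and the conjugation action of `H` on `K` is fixed-point-free. -/
def IsFrobeniusWith {G : Type*} [Group G] (K H : Subgroup G) : Prop :=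
  K ≠ ⊥ ∧ K ≠ ⊤ ∧ K.Normal ∧ K ⊓ H = ⊥ ∧
    (∀ g : G, ∃ k ∈ K, ∃ h ∈ H, g = k * h) ∧
    ∀ h ∈ H, h ≠ 1 → ∀ k ∈ K, k ≠ 1 → h * k * h⁻¹ ≠ k

/-- `G` is isomorphic to the outer semidirect product `N ⋊ C` for some
fixed-point-free action of `C` on `N` (i.e. a Frobenius semidirect product). -/
def IsoFrobSdp (G : Type*) [Group G] (N C : Type*) [Group N] [Group C] : Prop :=
  ∃ φ : C →* MulAut N,
    (∀ h : C, h ≠ 1 → ∀ x : N, x ≠ 1 → φ h x ≠ x) ∧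
      Nonempty (G ≃* SemidirectProduct N C φ)

/-!
In a Frobenius group `N ⋊ C` every `(x, c)` with `c ≠ 1` is conjugate to `c` by an element of `N`,
so for `n ≠ 1` the number of elements of order `n` is their number in `N` plus `|N|` times their
number in `C`, and coprimality of `|N|` and `|C|` makes one of the two terms vanish. Hence `N ⋊ C`
has perfect order classes iff `C` does and every order class of `N` has size dividing `|N| |C|`.

A nontrivial cyclic group `C` has perfect order classes iff `φ(|C|)` divides `|C|`, that is, iff
`|C| = 2 ^ a * 3 ^ b` with `a > 0`. Then an involution in `C` inverts `N`, so `N` is abelian. Each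
nontrivial order class of `N` is a union of regular `C`-orbits. If two primes `p ≠ q` divided `|N|`,
the class of order `p * q` would have size divisible by `|C| ^ 2`; so `N` is a product of groups
`C_{p ^ e i}`. Counting elements of order `p ^ e i` forces `p ^ t - 1 = |C|`, where `t` is the
number of `j` with `e j ≥ e i`. Thus `t` does not depend on `i`, all exponents agree, and
`p ^ r = 2 ^ a * 3 ^ b + 1` where `r` is the rank of `N`.

For even `r` this asks for consecutive integers with no prime factor above `3`; for odd `r > 1` the
factor `1 + p + ⋯ + p ^ (r - 1)` would be a power of `3`, which its `3`-adic valuation prevents.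
-/

section Arithmetic

theorem exists_eq_two_pow_mul_three_pow_of_dvd {u a b : ℕ} (h : u ∣ 2 ^ a * 3 ^ b) :
    ∃ i j, u = 2 ^ i * 3 ^ j := by
  obtain ⟨v, w, hv, hw, rfl⟩ := Nat.dvd_mul.1 h
  obtain ⟨i, -, rfl⟩ := (Nat.dvd_prime_pow Nat.prime_two).1 hv
  obtain ⟨j, -, rfl⟩ := (Nat.dvd_prime_pow Nat.prime_three).1 hw
  exact ⟨i, j, rfl⟩

theorem even_two_pow_mul_three_pow_iff {a b : ℕ} : Even (2 ^ a * 3 ^ b) ↔ 0 < a := by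
  have : ¬ Even 3 := by decide
  simp [Nat.even_mul, Nat.even_pow, this, pos_iff_ne_zero]

-- The modulus `80 = 3 ^ 4 - 1` determines `3 ^ l` modulo both `16` and `5`.
theorem three_pow_mod_eighty (l : ℕ) :
    3 ^ l % 80 = 1 ∨ 3 ^ l % 80 = 3 ∨ 3 ^ l % 80 = 9 ∨ 3 ^ l % 80 = 27 := by
  induction l with
  | zero => simp
  | succ l ih => rw [pow_succ]; omega

theorem three_pow_le_of_add_one_eq_two_pow {j k : ℕ} (h : 3 ^ j + 1 = 2 ^ k) : 3 ^ j ≤ 3 := by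
  have hmod := three_pow_mod_eighty j
  have hk : k < 3 := by
    by_contra! hk
    have : 2 ^ 3 ∣ 2 ^ k := pow_dvd_pow 2 hk
    omega
  interval_cases k <;> omega

theorem two_pow_eq_of_add_one_eq_three_pow {i l : ℕ} (h : 2 ^ i + 1 = 3 ^ l) :
    2 ^ i = 2 ∨ 2 ^ i = 8 := by
  have hmod := three_pow_mod_eighty l
  have hi : i < 4 := by
    by_contra! hi
    have h16 : 2 ^ 4 ∣ 2 ^ i := pow_dvd_pow 2 hi
    have h5 : 5 ∣ 2 := Nat.prime_five.dvd_of_dvd_pow (show 5 ∣ 2 ^ i by omega)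
    omega
  interval_cases i <;> omega

theorem eq_of_mul_succ_dvd_two_pow_mul_three_pow {u a b : ℕ} (h : u * (u + 1) ∣ 2 ^ a * 3 ^ b) :
    u = 1 ∨ u = 2 ∨ u = 3 ∨ u = 8 := by
  obtain ⟨i, j, hu⟩ := exists_eq_two_pow_mul_three_pow_of_dvd (dvd_of_mul_right_dvd h)
  obtain ⟨k, l, hu'⟩ := exists_eq_two_pow_mul_three_pow_of_dvd (dvd_of_mul_left_dvd h)
  have eq_zero_or_eq_zero {q m n : ℕ} (hq : 1 < q) (hm : q ^ m ∣ u) (hn : q ^ n ∣ u + 1) :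
      m = 0 ∨ n = 0 := by
    by_contra! hmn
    have hqu : q ∣ u := (dvd_pow_self q hmn.1).trans hm
    have hq1 := (Nat.dvd_add_right hqu).1 ((dvd_pow_self q hmn.2).trans hn)
    exact hq.ne' (Nat.dvd_one.1 hq1)
  have h2 : i = 0 ∨ k = 0 :=
    eq_zero_or_eq_zero one_lt_two (hu ▸ dvd_mul_right _ _) (hu' ▸ dvd_mul_right _ _)
  have h3 : j = 0 ∨ l = 0 :=
    eq_zero_or_eq_zero (by simp) (hu ▸ dvd_mul_left _ _) (hu' ▸ dvd_mul_left _ _)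
  rcases h2 with rfl | rfl <;> rcases h3 with rfl | rfl <;>
    simp only [pow_zero, one_mul, mul_one] at hu hu'
  · exact .inl hu
  · have := three_pow_le_of_add_one_eq_two_pow (hu ▸ hu')
    have := three_pow_mod_eighty j
    omega
  · have := two_pow_eq_of_add_one_eq_three_pow (hu ▸ hu')
    omega
  · have : 0 < 2 ^ i * 3 ^ j := by positivity
    omega

theorem eq_of_sq_eq_two_pow_mul_three_pow_add_one {x a b : ℕ} (hx : Odd x)
    (h : x ^ 2 = 2 ^ a * 3 ^ b + 1) : x = 3 ∨ x = 5 ∨ x = 7 ∨ x = 17 := by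
  obtain ⟨u, rfl⟩ := hx
  have hu := eq_of_mul_succ_dvd_two_pow_mul_three_pow (u := u) (a := a) (b := b)
    ⟨4, by linarith⟩
  omega

-- By lifting the exponent, the `3`-part of the sum is that of `r`, while the sum exceeds `r`.
theorem geom_sum_ne_three_pow {x r : ℕ} (hx : 1 < x) (hr : Odd r) (hr1 : 1 < r) (c : ℕ) :
    ∑ i ∈ Finset.range r, x ^ i ≠ 3 ^ c := by
  intro hS
  have hrS : r < ∑ i ∈ Finset.range r, x ^ i := by
    simpa using Finset.sum_lt_sum (s := Finset.range r) (f := fun _ ↦ 1) (g := fun i ↦ x ^ i)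
      (fun i _ ↦ Nat.one_le_pow _ _ (by omega)) ⟨1, by simpa using hr1, by simpa using hx⟩
  have hc : c ≠ 0 := by rintro rfl; rw [pow_zero] at hS; omega
  have hgeom : 3 ^ c * (x - 1) = x ^ r - 1 := hS ▸ geom_sum_mul_of_one_le hx.le r
  have hx3 : x % 3 = 1 := by
    have h1 : x ^ r % 3 = 1 := by
      have h3 : 3 ∣ x ^ r - 1 := hgeom ▸ (dvd_pow_self 3 hc).mul_right _
      have := Nat.one_lt_pow (n := r) (by omega) hx
      omega
    obtain ⟨t, rfl⟩ := hr
    have hlt : x % 3 < 3 := Nat.mod_lt _ (by norm_num)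
    rw [pow_succ, pow_mul, Nat.mul_mod, Nat.pow_mod, Nat.pow_mod x] at h1
    interval_cases x % 3 <;> simp at h1 ⊢
  have : Fact (Nat.Prime 3) := ⟨Nat.prime_three⟩
  have hval : padicValNat 3 r = c := by
    have hLTE := padicValNat.pow_sub_pow (p := 3) (n := r) (by decide) hx (by omega) (by omega)
      (by omega)
    rw [one_pow, ← hgeom, padicValNat.mul (by positivity) (by omega), padicValNat.prime_pow] at hLTE
    omega
  have hle : 3 ^ c ≤ r := Nat.le_of_dvd (by omega) (hval ▸ pow_padicValNat_dvd)
  omega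

theorem odd_pow_ne_two_pow_mul_three_pow_add_one {x r : ℕ} (hx : Odd x) (hx1 : 1 < x)
    (hr : Odd r) (hr1 : 1 < r) (a b : ℕ) : x ^ r ≠ 2 ^ a * 3 ^ b + 1 := by
  intro h
  have hdvd : ∑ i ∈ Finset.range r, x ^ i ∣ 2 ^ a * 3 ^ b :=
    ⟨x - 1, by rw [geom_sum_mul_of_one_le hx1.le, h, Nat.add_sub_cancel]⟩
  have hodd : Odd (∑ i ∈ Finset.range r, x ^ i) := by
    rw [Finset.odd_sum_iff_odd_card_odd, Finset.filter_true_of_mem fun i _ ↦ hx.pow]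
    simpa using hr
  obtain ⟨c, -, hc⟩ := (Nat.dvd_prime_pow Nat.prime_three).1
    ((Nat.Coprime.pow_right a hodd.coprime_two_right).dvd_of_dvd_mul_left hdvd)
  exact geom_sum_ne_three_pow hx1 hr hr1 c hc

theorem prime_pow_eq_two_pow_mul_three_pow_add_one {p r a b : ℕ} (hp : p.Prime) (ha : 0 < a)
    (h : p ^ r = 2 ^ a * 3 ^ b + 1) :
    r = 1 ∨ r = 2 ∧ (p = 3 ∨ p = 5 ∨ p = 7 ∨ p = 17) := by
  have hr : r ≠ 0 := by rintro rfl; simp at h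
  have hpo : Odd p := by
    rw [← Nat.odd_pow_iff hr, h]
    exact (even_two_pow_mul_three_pow_iff.2 ha).add_one
  rcases Nat.even_or_odd' r with ⟨s, rfl | rfl⟩
  · have hps := eq_of_sq_eq_two_pow_mul_three_pow_add_one (x := p ^ s) hpo.pow
      (by rw [← h, ← pow_mul, mul_comm])
    have hprime : (p ^ s).Prime := by rcases hps with h | h | h | h <;> rw [h] <;> norm_num
    obtain rfl : s = 1 := hprime.eq_one_of_pow
    exact .inr ⟨rfl, by simpa using hps⟩
  · by_contra! hne
    exact odd_pow_ne_two_pow_mul_three_pow_add_one hpo hp.one_lt ⟨s, rfl⟩ (by omega) a b h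

theorem totient_two_pow_mul_three_pow_dvd {a : ℕ} (ha : 0 < a) (b : ℕ) :
    (2 ^ a * 3 ^ b).totient ∣ 2 ^ a * 3 ^ b := by
  rw [Nat.totient_mul (Nat.Coprime.pow _ _ (by norm_num)), Nat.totient_prime_pow Nat.prime_two ha]
  obtain ⟨a, rfl⟩ := Nat.exists_eq_add_of_le' ha
  cases b with
  | zero => simp [pow_succ]
  | succ b =>
    rw [Nat.totient_prime_pow_succ Nat.prime_three]
    exact ⟨3, by norm_num; ring⟩

theorem prod_primeFactors_sub_one_dvd_of_totient_dvd {m : ℕ} (h : m.totient ∣ m) :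
    ∏ p ∈ m.primeFactors, (p - 1) ∣ ∏ p ∈ m.primeFactors, p := by
  rcases m.eq_zero_or_pos with rfl | hm
  · simp
  obtain ⟨c, hc⟩ := h
  refine ⟨c, mul_left_cancel₀ (Nat.totient_pos.2 hm).ne' ?_⟩
  rw [Nat.totient_mul_prod_primeFactors, mul_left_comm, ← hc, mul_comm]

theorem four_not_dvd_prod_primeFactors (m : ℕ) : ¬ 4 ∣ ∏ p ∈ m.primeFactors, p := by
  rw [← Nat.radical_eq_prod_primeFactors]
  exact fun h ↦ absurd (UniqueFactorizationMonoid.squarefree_radical 2 h) (by decide)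

theorem two_mem_primeFactors_of_totient_dvd {m : ℕ} (hm : 1 < m) (h : m.totient ∣ m) :
    2 ∈ m.primeFactors := by
  suffices 2 ∣ m from Nat.mem_primeFactors.2 ⟨Nat.prime_two, this, by omega⟩
  obtain ⟨q, hq, hqm⟩ := Nat.exists_prime_and_dvd hm.ne'
  rcases hq.eq_two_or_odd' with rfl | hqo
  · exact hqm
  · calc 2 ∣ q - 1 := (Nat.Odd.sub_odd hqo odd_one).two_dvd
      _ = q.totient := (Nat.totient_prime hq).symm
      _ ∣ m.totient := Nat.totient_dvd_of_dvd hqm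
      _ ∣ m := h

theorem eq_of_odd_of_mem_primeFactors_of_totient_dvd {m p q : ℕ} (h : m.totient ∣ m)
    (hp : p ∈ m.primeFactors) (hq : q ∈ m.primeFactors) (hpo : Odd p) (hqo : Odd q) : p = q := by
  by_contra hpq
  apply four_not_dvd_prod_primeFactors m
  calc 4 ∣ (p - 1) * (q - 1) :=
        mul_dvd_mul (Nat.Odd.sub_odd hpo odd_one).two_dvd (Nat.Odd.sub_odd hqo odd_one).two_dvd
    _ = ∏ r ∈ {p, q}, (r - 1) := by rw [Finset.prod_pair hpq]
    _ ∣ ∏ r ∈ m.primeFactors, (r - 1) :=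
        Finset.prod_dvd_prod_of_subset _ _ _ (by simp [Finset.insert_subset_iff, hp, hq])
    _ ∣ ∏ r ∈ m.primeFactors, r := prod_primeFactors_sub_one_dvd_of_totient_dvd h

theorem primeFactors_subset_of_totient_dvd {m : ℕ} (hm : 1 < m) (h : m.totient ∣ m) :
    m.primeFactors ⊆ {2, 3} := by
  intro q hq
  have hqp := Nat.prime_of_mem_primeFactors hq
  rcases hqp.eq_two_or_odd' with rfl | hqo
  · simp
  have hsupp : m.primeFactors = {q, 2} := by
    ext p
    simp only [Finset.mem_insert, Finset.mem_singleton]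
    constructor
    · intro hp
      exact (Nat.prime_of_mem_primeFactors hp).eq_two_or_odd'.symm.imp_left fun hpo ↦
        eq_of_odd_of_mem_primeFactors_of_totient_dvd h hp hq hpo hqo
    · rintro (rfl | rfl)
      exacts [hq, two_mem_primeFactors_of_totient_dvd hm h]
  have hne : q ≠ 2 := by rintro rfl; exact absurd hqo (by decide)
  have hdvd : q - 1 ∣ q * 2 := by
    simpa [hsupp, Finset.prod_pair hne] using prod_primeFactors_sub_one_dvd_of_totient_dvd h
  have hcop : (q - 1).Coprime q :=
    (Nat.coprime_self_sub_left hqp.one_lt.le).2 (Nat.coprime_one_left _)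
  have hle := Nat.le_of_dvd two_pos (hcop.dvd_of_dvd_mul_left hdvd)
  have := hqp.two_le
  obtain rfl : q = 3 := by omega
  simp

theorem totient_dvd_self_iff {m : ℕ} (hm : 1 < m) :
    m.totient ∣ m ↔ ∃ a b, 0 < a ∧ m = 2 ^ a * 3 ^ b := by
  refine ⟨fun h ↦ ⟨m.factorization 2, m.factorization 3, ?_, ?_⟩, ?_⟩
  · have h2 := two_mem_primeFactors_of_totient_dvd hm h
    exact Nat.prime_two.factorization_pos_of_dvd (by omega) (Nat.dvd_of_mem_primeFactors h2)
  · have hsub := primeFactors_subset_of_totient_dvd hm h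
    conv_lhs => rw [← Nat.prod_factorization_pow_eq_self (show m ≠ 0 by omega),
      Finsupp.prod_of_support_subset _ hsub _ (by simp)]
    simp
  · rintro ⟨a, b, ha, rfl⟩
    exact totient_two_pow_mul_three_pow_dvd ha b

end Arithmetic

section OrderCount

variable {A B : Type*} [Group A] [Group B]

theorem orderCount_congr (e : A ≃* B) (n : ℕ) : orderCount A n = orderCount B n :=
  Nat.card_congr (e.toEquiv.subtypeEquiv fun a ↦ by simp [MulEquiv.orderOf_eq])

theorem perfectOrderClasses_congr (e : A ≃* B) :
    PerfectOrderClasses A ↔ PerfectOrderClasses B := by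
  simp only [PerfectOrderClasses, orderCount_congr e, Nat.card_congr e.toEquiv]

theorem orderCount_one (A : Type*) [Group A] : orderCount A 1 = 1 := by
  simp [orderCount, orderOf_eq_one_iff]

theorem orderCount_eq_zero_of_not_dvd {n : ℕ} (hn : ¬ n ∣ Nat.card A) : orderCount A n = 0 := by
  have : IsEmpty {a : A // orderOf a = n} := ⟨fun a ↦ hn (a.2 ▸ orderOf_dvd_natCard a.1)⟩
  exact Nat.card_of_isEmpty

theorem orderCount_orderOf_pos [Finite A] (a : A) : 0 < orderCount A (orderOf a) :=
  have : Nonempty {b : A // orderOf b = orderOf a} := ⟨⟨a, rfl⟩⟩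
  Nat.card_pos

theorem perfectOrderClasses_iff_forall_orderOf [Finite A] :
    PerfectOrderClasses A ↔ ∀ a : A, orderCount A (orderOf a) ∣ Nat.card A := by
  refine ⟨fun h a ↦ (h _ (orderOf_pos a)).resolve_left (orderCount_orderOf_pos a).ne',
    fun h n _ ↦ ?_⟩
  by_cases hn : ∃ a : A, orderOf a = n
  · obtain ⟨a, rfl⟩ := hn
    exact .inr (h a)
  · have : IsEmpty {a : A // orderOf a = n} := ⟨fun a ↦ hn ⟨a, a.2⟩⟩
    exact .inl Nat.card_of_isEmpty

theorem orderCount_eq_totient [Finite A] [IsCyclic A] {d : ℕ} (hd : d ∣ Nat.card A) :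
    orderCount A d = d.totient := by
  classical
  have := Fintype.ofFinite A
  rw [Nat.card_eq_fintype_card] at hd
  rw [← IsCyclic.card_orderOf_eq_totient hd, orderCount, Nat.card_eq_fintype_card,
    Fintype.card_subtype]

theorem perfectOrderClasses_iff_totient_dvd [Finite A] [IsCyclic A] :
    PerfectOrderClasses A ↔ (Nat.card A).totient ∣ Nat.card A := by
  rw [perfectOrderClasses_iff_forall_orderOf]
  constructor
  · intro h
    obtain ⟨g, hg⟩ := IsCyclic.exists_ofOrder_eq_natCard (α := A)
    simpa only [hg, orderCount_eq_totient dvd_rfl] using h g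
  · intro h a
    have ha := orderOf_dvd_natCard a
    rw [orderCount_eq_totient ha]
    exact (Nat.totient_dvd_of_dvd ha).trans h

theorem orderCount_mul_of_coprime {A : Type*} [CommGroup A] [Finite A] {m n : ℕ}
    (hmn : m.Coprime n) : orderCount A (m * n) = orderCount A m * orderCount A n := by
  have eq_of_pow_eq {x y : A} (hm : x ^ m = y ^ m) (hn : x ^ n = y ^ n) : x = y := by
    have hone : (x / y) ^ m.gcd n = 1 :=
      pow_gcd_eq_one.2 ⟨by rw [div_pow, hm, div_self'], by rw [div_pow, hn, div_self']⟩
    rwa [hmn, pow_one, div_eq_one] at hone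
  have orderOf_pow_left {x : A} {k l : ℕ} (hx : orderOf x = k * l) : orderOf (x ^ l) = k := by
    have hl : 0 < l := Nat.pos_of_mul_pos_left (hx ▸ orderOf_pos x)
    rw [orderOf_pow_of_dvd hl.ne' (hx ▸ dvd_mul_left _ _), hx, Nat.mul_div_cancel _ hl]
  rw [orderCount, orderCount, orderCount, ← Nat.card_prod]
  refine le_antisymm
    (Nat.card_le_card_of_injective
      (fun z ↦ (⟨z ^ n, orderOf_pow_left z.2⟩,
        ⟨z ^ m, orderOf_pow_left (z.2.trans (mul_comm m n))⟩)) ?_)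
    (Nat.card_le_card_of_injective
      (fun z ↦ ⟨z.1 * z.2, (Commute.all _ _).orderOf_mul_eq_mul_orderOf_of_coprime
        (by rwa [z.1.2, z.2.2]) |>.trans (by rw [z.1.2, z.2.2])⟩) ?_)
  · intro x y hxy
    simp only [Prod.mk.injEq, Subtype.mk.injEq] at hxy
    exact Subtype.ext (eq_of_pow_eq hxy.2 hxy.1)
  · rintro ⟨⟨x, hx⟩, ⟨y, hy⟩⟩ ⟨⟨x', hx'⟩, ⟨y', hy'⟩⟩ h
    have h : x * y = x' * y' := congrArg Subtype.val h
    have hxx' : x = x' := by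
      refine eq_of_pow_eq ?_ ?_
      · rw [orderOf_dvd_iff_pow_eq_one.1 hx.dvd, orderOf_dvd_iff_pow_eq_one.1 hx'.dvd]
      · simpa [mul_pow, orderOf_dvd_iff_pow_eq_one.1 hy.dvd, orderOf_dvd_iff_pow_eq_one.1 hy'.dvd]
          using congrArg (· ^ n) h
    subst hxx'
    simpa using h

theorem card_pow_eq_one_prime_pow_succ [Finite A] {p : ℕ} (hp : p.Prime) (j : ℕ) :
    Nat.card {a : A // a ^ p ^ (j + 1) = 1} =
      Nat.card {a : A // a ^ p ^ j = 1} + orderCount A (p ^ (j + 1)) := by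
  classical
  have := Fintype.ofFinite A
  have card_pow_eq_one (i : ℕ) : Nat.card {a : A // a ^ p ^ i = 1} =
      ∑ l ∈ Finset.range (i + 1), orderCount A (p ^ l) := by
    have hsum := sum_card_orderOf_eq_card_pow_eq_one (G := A) (pow_ne_zero i hp.ne_zero)
    rw [Nat.sum_divisors_prime_pow hp] at hsum
    simpa only [orderCount, Nat.card_eq_fintype_card, Fintype.card_subtype] using hsum.symm
  rw [card_pow_eq_one, card_pow_eq_one, Finset.sum_range_succ]

end OrderCount

section Pi

variable {ι : Type*} [Fintype ι]

theorem card_pow_eq_one_pi {A : ι → Type*} [∀ i, CommGroup (A i)] [∀ i, IsCyclic (A i)]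
    [∀ i, Finite (A i)] (d : ℕ) :
    Nat.card {x : (i : ι) → A i // x ^ d = 1} = ∏ i, (Nat.card (A i)).gcd d := by
  let e : {x : (i : ι) → A i // x ^ d = 1} ≃ ((i : ι) → {z : A i // z ^ d = 1}) :=
    (Equiv.subtypeEquivRight fun x ↦ by simp [funext_iff]).trans
      (Equiv.subtypePiEquivPi (p := fun i (z : A i) ↦ z ^ d = 1))
  rw [Nat.card_congr e, Nat.card_pi]
  exact Finset.prod_congr rfl fun i _ ↦ IsCyclic.card_powMonoidHom_ker (A i) d

theorem orderCount_pi_zmod_prime_pow {p : ℕ} (hp : p.Prime) (e : ι → ℕ) (j : ℕ) :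
    orderCount ((i : ι) → Multiplicative (ZMod (p ^ e i))) (p ^ (j + 1)) =
      p ^ (∑ i, min (e i) j) * (p ^ Fintype.card {i // j < e i} - 1) := by
  have : NeZero p := ⟨hp.ne_zero⟩
  have card_pow_eq_one (l : ℕ) :
      Nat.card {x : (i : ι) → Multiplicative (ZMod (p ^ e i)) // x ^ p ^ l = 1} =
        p ^ ∑ i, min (e i) l := by
    rw [card_pow_eq_one_pi, ← Finset.prod_pow_eq_pow_sum]
    refine Finset.prod_congr rfl fun i _ ↦ ?_
    rw [Nat.card_congr Multiplicative.toAdd, Nat.card_zmod]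
    rcases le_total (e i) l with h | h
    · rw [min_eq_left h, Nat.gcd_eq_left (pow_dvd_pow p h)]
    · rw [min_eq_right h, Nat.gcd_eq_right (pow_dvd_pow p h)]
  have hsum : ∑ i, min (e i) (j + 1) = ∑ i, min (e i) j + Fintype.card {i // j < e i} := by
    rw [Fintype.card_subtype, Finset.card_filter, ← Finset.sum_add_distrib]
    refine Finset.sum_congr rfl fun i _ ↦ ?_
    split_ifs <;> omega
  have hcount := card_pow_eq_one_prime_pow_succ
    (A := (i : ι) → Multiplicative (ZMod (p ^ e i))) hp j
  rw [card_pow_eq_one, card_pow_eq_one, hsum, pow_add] at hcount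
  rw [Nat.mul_sub_one]
  omega

end Pi

section FixedPointFree

open SemidirectProduct

/-- The action `φ` of `C` on `N` is fixed-point-free: no nontrivial element of `C` fixes a
nontrivial element of `N`. This is the condition imposed on the action in `IsoFrobSdp`. -/
def IsFixedPointFreeAction {N C : Type*} [Group N] [Group C] (φ : C →* MulAut N) : Prop :=
  ∀ c : C, c ≠ 1 → ∀ x : N, x ≠ 1 → φ c x ≠ x

namespace IsFixedPointFreeAction

variable {N C : Type*} [Group N] [Group C] {φ : C →* MulAut N}

theorem card_dvd_card_subtype (hφ : IsFixedPointFreeAction φ) {P : N → Prop} (hone : ¬ P 1)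
    (hP : ∀ c x, P x → P (φ c x)) : Nat.card C ∣ Nat.card {x // P x} := by
  let _ : MulAction C {x // P x} :=
    { smul := fun c x ↦ ⟨φ c x, hP c x x.2⟩
      one_smul := fun x ↦ Subtype.ext (by change φ 1 x.1 = x.1; simp)
      mul_smul := fun c d x ↦ Subtype.ext (by change φ (c * d) x.1 = φ c (φ d x.1); simp) }
  have hstab (x : {x // P x}) : MulAction.stabilizer C x = ⊥ := by
    refine (Subgroup.eq_bot_iff_forall _).2 fun c hc ↦ ?_
    by_contra hc1
    exact hφ c hc1 x (fun h ↦ hone (h ▸ x.2)) (congrArg Subtype.val hc)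
  rw [Nat.card_congr (MulAction.selfEquivOrbitsQuotientProd hstab), Nat.card_prod]
  exact dvd_mul_left _ _

theorem card_dvd_orderCount (hφ : IsFixedPointFreeAction φ) {n : ℕ} (hn : n ≠ 1) :
    Nat.card C ∣ orderCount N n :=
  hφ.card_dvd_card_subtype (by simpa using hn.symm) fun c x hx ↦ by rw [MulEquiv.orderOf_eq, hx]

theorem coprime_card [Finite N] (hφ : IsFixedPointFreeAction φ) :
    (Nat.card N).Coprime (Nat.card C) := by
  classical
  have := Fintype.ofFinite N
  have hdvd : Nat.card C ∣ Nat.card N - 1 := by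
    simpa [Fintype.card_subtype_compl] using
      hφ.card_dvd_card_subtype (P := (· ≠ 1)) (by simp) fun c x hx ↦ by simpa using hx
  exact ((Nat.coprime_self_sub_right (Nat.card_pos (α := N))).2
    (Nat.coprime_one_right _)).coprime_dvd_right hdvd

theorem fixedPointFree (hφ : IsFixedPointFreeAction φ) {c : C} (hc : c ≠ 1) :
    MonoidHom.FixedPointFree (φ c) := fun x hx ↦ by
  by_contra hx1
  exact hφ c hc x hx1 hx

theorem orderOf_mk [Finite N] (hφ : IsFixedPointFreeAction φ) {c : C} (hc : c ≠ 1) (x : N) :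
    orderOf (⟨x, c⟩ : N ⋊[φ] C) = orderOf c := by
  obtain ⟨y, rfl⟩ := (hφ.fixedPointFree hc).commutatorMap_surjective x
  have hconj : (⟨MonoidHom.commutatorMap (φ c) y, c⟩ : N ⋊[φ] C) =
      MulAut.conj (inl y) (inr c) := by
    ext <;> simp [MonoidHom.commutatorMap, div_eq_mul_inv, ← map_inv]
  rw [hconj, MulEquiv.orderOf_eq, orderOf_injective inr inr_injective]

theorem orderCount_semidirectProduct [Finite N] [Finite C] (hφ : IsFixedPointFreeAction φ)
    {n : ℕ} (hn : n ≠ 1) :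
    orderCount (N ⋊[φ] C) n = orderCount N n + Nat.card N * orderCount C n := by
  have ne_one (c : {c : C // orderOf c = n}) : c.1 ≠ 1 := fun h ↦ hn (by simp [← c.2, h])
  let f : {x : N // orderOf x = n} ⊕ N × {c : C // orderOf c = n} →
      {g : N ⋊[φ] C // orderOf g = n} :=
    Sum.elim (fun x ↦ ⟨inl x.1, (orderOf_injective inl inl_injective x.1).trans x.2⟩)
      fun z ↦ ⟨⟨z.1, z.2.1⟩, (hφ.orderOf_mk (ne_one z.2) z.1).trans z.2.2⟩
  have hf : f.Bijective := by
    constructor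
    · rintro (⟨x, hx⟩ | ⟨x, c⟩) (⟨y, hy⟩ | ⟨y, d⟩) hxy
      · simpa [f] using hxy
      · exact absurd (congrArg (·.1.right) hxy).symm (ne_one d)
      · exact absurd (congrArg (·.1.right) hxy) (ne_one c)
      · exact congrArg Sum.inr
          (Prod.ext (congrArg (·.1.left) hxy) (Subtype.ext (congrArg (·.1.right) hxy)))
    · rintro ⟨⟨x, c⟩, hg⟩
      rcases eq_or_ne c 1 with rfl | hc
      · exact ⟨.inl ⟨x, (orderOf_injective inl inl_injective x).symm.trans hg⟩, rfl⟩
      · exact ⟨.inr (x, ⟨c, (hφ.orderOf_mk hc x).symm.trans hg⟩), rfl⟩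
  rw [orderCount, ← Nat.card_congr (Equiv.ofBijective f hf), Nat.card_sum, Nat.card_prod]
  rfl

theorem orderCount_semidirectProduct_orderOf_left [Finite N] [Finite C]
    (hφ : IsFixedPointFreeAction φ) {x : N} (hx : x ≠ 1) :
    orderCount (N ⋊[φ] C) (orderOf x) = orderCount N (orderOf x) := by
  have hx1 : orderOf x ≠ 1 := mt orderOf_eq_one_iff.1 hx
  rw [hφ.orderCount_semidirectProduct hx1, orderCount_eq_zero_of_not_dvd (A := C), mul_zero,
    add_zero]
  exact fun h ↦ hx1 (Nat.eq_one_of_dvd_coprimes hφ.coprime_card (orderOf_dvd_natCard x) h)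

theorem orderCount_semidirectProduct_orderOf_right [Finite N] [Finite C]
    (hφ : IsFixedPointFreeAction φ) {c : C} (hc : c ≠ 1) :
    orderCount (N ⋊[φ] C) (orderOf c) = Nat.card N * orderCount C (orderOf c) := by
  have hc1 : orderOf c ≠ 1 := mt orderOf_eq_one_iff.1 hc
  rw [hφ.orderCount_semidirectProduct hc1, orderCount_eq_zero_of_not_dvd (A := N), zero_add]
  exact fun h ↦ hc1 (Nat.eq_one_of_dvd_coprimes hφ.coprime_card h (orderOf_dvd_natCard c))

theorem perfectOrderClasses_iff [Finite N] [Finite C] (hφ : IsFixedPointFreeAction φ) :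
    PerfectOrderClasses (N ⋊[φ] C) ↔
      (∀ x : N, orderCount N (orderOf x) ∣ Nat.card N * Nat.card C) ∧ PerfectOrderClasses C := by
  have : Finite (N ⋊[φ] C) := Finite.of_equiv _ equivProd.symm
  rw [perfectOrderClasses_iff_forall_orderOf, perfectOrderClasses_iff_forall_orderOf, card]
  refine ⟨fun h ↦ ⟨fun x ↦ ?_, fun c ↦ ?_⟩, fun ⟨hN, hC⟩ ⟨x, c⟩ ↦ ?_⟩
  · rcases eq_or_ne x 1 with rfl | hx
    · simp [orderCount_one]
    · rw [← hφ.orderCount_semidirectProduct_orderOf_left hx]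
      simpa [orderOf_injective inl inl_injective] using h (inl x)
  · rcases eq_or_ne c 1 with rfl | hc
    · simp [orderCount_one]
    · have hdvd := h (inr c)
      rw [orderOf_injective inr inr_injective, hφ.orderCount_semidirectProduct_orderOf_right hc]
        at hdvd
      exact Nat.dvd_of_mul_dvd_mul_left Nat.card_pos hdvd
  · rcases eq_or_ne c 1 with rfl | hc
    · rw [show (⟨x, 1⟩ : N ⋊[φ] C) = inl x from rfl, orderOf_injective inl inl_injective]
      rcases eq_or_ne x 1 with rfl | hx
      · simp [orderCount_one]
      · rw [hφ.orderCount_semidirectProduct_orderOf_left hx]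
        exact hN x
    · rw [hφ.orderOf_mk hc, hφ.orderCount_semidirectProduct_orderOf_right hc]
      exact mul_dvd_mul_left _ (hC c)

theorem commute_of_even_card [Finite N] [Finite C] (hφ : IsFixedPointFreeAction φ)
    (heven : Even (Nat.card C)) (x y : N) : Commute x y := by
  obtain ⟨c, hc⟩ := exists_prime_orderOf_dvd_card' 2 heven.two_dvd
  have hc1 : c ≠ 1 := by rintro rfl; simp at hc
  have hcc : c * c = 1 := by rw [← pow_two, ← hc, pow_orderOf_eq_one]
  refine (hφ.fixedPointFree hc1).commute_all_of_involutive (fun z ↦ ?_) x y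
  rw [← MulAut.mul_apply, ← map_mul, hcc, map_one, MulAut.one_apply]

end IsFixedPointFreeAction

end FixedPointFree

section AbelianKernel

theorem exists_mulEquiv_pi_zmod_of_card_eq_prime_pow {N : Type*} [CommGroup N] [Finite N] {p s : ℕ}
    (hp : p.Prime) (hcard : Nat.card N = p ^ s) :
    ∃ (ι : Type) (_ : Fintype ι) (e : ι → ℕ), (∀ i, 0 < e i) ∧
      Nonempty (N ≃* ((i : ι) → Multiplicative (ZMod (p ^ e i)))) := by
  obtain ⟨ι, _, n, hn, ⟨f⟩⟩ := CommGroup.equiv_prod_multiplicative_zmod_of_finite N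
  have hdvd (i : ι) : n i ∣ p ^ s := by
    rw [← hcard, Nat.card_congr f.toEquiv, Nat.card_pi]
    simpa [Nat.card_congr Multiplicative.toAdd] using
      Finset.dvd_prod_of_mem n (Finset.mem_univ i)
  choose e _ he using fun i ↦ (Nat.dvd_prime_pow hp).1 (hdvd i)
  obtain rfl : n = fun i ↦ p ^ e i := funext he
  exact ⟨ι, ‹_›, e, fun i ↦ Nat.pos_of_ne_zero fun h ↦ by simpa [h] using hn i, ⟨f⟩⟩

theorem exists_orderOf_eq_pi_zmod {ι : Type*} (m : ι → ℕ) (i : ι) :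
    ∃ x : (i : ι) → Multiplicative (ZMod (m i)), orderOf x = m i := by
  classical
  exact ⟨Pi.mulSingle i (.ofAdd 1), by
    rw [orderOf_piMulSingle, orderOf_ofAdd_eq_addOrderOf, ZMod.addOrderOf_one]⟩

theorem pow_sub_one_eq_of_dvd_of_dvd {p l s t m : ℕ} (hp : 0 < p) (ht : t ≠ 0) (hcop : p.Coprime m)
    (hm : m ∣ p ^ l * (p ^ t - 1)) (hdvd : p ^ l * (p ^ t - 1) ∣ p ^ s * m) : p ^ t - 1 = m := by
  have hcop' : (p ^ t - 1).Coprime p :=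
    ((Nat.coprime_self_sub_left (Nat.pow_pos hp)).2 (Nat.coprime_one_left _)).coprime_dvd_right
      (dvd_pow_self p ht)
  exact Nat.dvd_antisymm
    ((hcop'.pow_right s).dvd_of_dvd_mul_left ((dvd_mul_left _ _).trans hdvd))
    ((hcop.symm.pow_right l).dvd_of_dvd_mul_left hm)

theorem orderCount_orderOf_pi_zmod_dvd {ι : Type*} [Fintype ι] {p : ℕ} (hp : p.Prime) (k : ℕ)
    (x : ι → Multiplicative (ZMod (p ^ k))) :
    orderCount (ι → Multiplicative (ZMod (p ^ k))) (orderOf x) ∣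
      Nat.card (ι → Multiplicative (ZMod (p ^ k))) * (p ^ Fintype.card ι - 1) := by
  have hx : orderOf x ∣ p ^ k := orderOf_dvd_of_pow_eq_one <| funext fun i ↦ by
    simpa [Nat.card_congr Multiplicative.toAdd] using pow_card_eq_one' (x := x i)
  obtain ⟨j, hj, hxj⟩ := (Nat.dvd_prime_pow hp).1 hx
  rw [hxj]
  cases j with
  | zero => simp [orderCount_one]
  | succ j =>
    have hjk : j < k := hj
    have hcount : orderCount (ι → Multiplicative (ZMod (p ^ k))) (p ^ (j + 1)) =
        (p ^ j) ^ Fintype.card ι * (p ^ Fintype.card ι - 1) := by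
      rw [orderCount_pi_zmod_prime_pow hp fun _ ↦ k]
      simp [hjk, hjk.le, pow_mul']
    rw [hcount, Nat.card_fun, Nat.card_congr Multiplicative.toAdd, Nat.card_zmod,
      Nat.card_eq_fintype_card]
    exact mul_dvd_mul_right (pow_dvd_pow_of_dvd (pow_dvd_pow p hjk.le) _) _

namespace IsFixedPointFreeAction

variable {N C : Type*} [CommGroup N] [Finite N] [Group C] {φ : C →* MulAut N}

theorem exists_card_eq_prime_pow [Finite C] [Nontrivial N] [Nontrivial C]
    (hφ : IsFixedPointFreeAction φ)
    (h : ∀ x : N, orderCount N (orderOf x) ∣ Nat.card N * Nat.card C) :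
    ∃ p s : ℕ, p.Prime ∧ Nat.card N = p ^ s := by
  obtain ⟨p, hp, hpN⟩ := Nat.exists_prime_and_dvd (Finite.one_lt_card (α := N)).ne'
  refine ⟨p, _, hp, Nat.eq_prime_pow_of_unique_prime_dvd Nat.card_pos.ne' fun {q} hq hqN ↦ ?_⟩
  by_contra hqp
  have hcop : p.Coprime q := (Nat.coprime_primes hp hq).2 (Ne.symm hqp)
  have := Fact.mk hp
  have := Fact.mk hq
  obtain ⟨x, hx⟩ := exists_prime_orderOf_dvd_card' p hpN
  obtain ⟨y, hy⟩ := exists_prime_orderOf_dvd_card' q hqN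
  have hxy : orderOf (x * y) = p * q := by
    rw [(Commute.all x y).orderOf_mul_eq_mul_orderOf_of_coprime (by rwa [hx, hy]), hx, hy]
  have hdvd : Nat.card C * Nat.card C ∣ Nat.card N * Nat.card C := calc
    Nat.card C * Nat.card C ∣ orderCount N p * orderCount N q :=
      mul_dvd_mul (hφ.card_dvd_orderCount hp.ne_one) (hφ.card_dvd_orderCount hq.ne_one)
    _ = orderCount N (p * q) := (orderCount_mul_of_coprime hcop).symm
    _ ∣ Nat.card N * Nat.card C := hxy ▸ h (x * y)
  have hone := Nat.eq_one_of_dvd_coprimes hφ.coprime_card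
    (Nat.dvd_of_mul_dvd_mul_right Nat.card_pos hdvd) dvd_rfl
  exact (Finite.one_lt_card (α := C)).ne' hone

variable {ι : Type*} {p : ℕ} {e : ι → ℕ}

theorem prime_pow_sub_one_eq_card [Fintype ι] (hφ : IsFixedPointFreeAction φ)
    (h : ∀ x : N, orderCount N (orderOf x) ∣ Nat.card N * Nat.card C) (hp : p.Prime)
    (f : N ≃* ((i : ι) → Multiplicative (ZMod (p ^ e i)))) {i : ι} (hi : 0 < e i) :
    p ^ Fintype.card {j // e i ≤ e j} - 1 = Nat.card C := by
  have hcard : Nat.card N = p ^ ∑ i, e i := by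
    rw [Nat.card_congr f.toEquiv, Nat.card_pi, ← Finset.prod_pow_eq_pow_sum]
    simp [Nat.card_congr Multiplicative.toAdd]
  obtain ⟨l, hl⟩ := Nat.exists_eq_add_of_le' hi
  obtain ⟨x, hx⟩ := exists_orderOf_eq_pi_zmod (fun i ↦ p ^ e i) i
  have hxl : orderOf (f.symm x) = p ^ (l + 1) := by rw [MulEquiv.orderOf_eq, hx, hl]
  have hcount : orderCount N (p ^ (l + 1)) =
      p ^ (∑ j, min (e j) l) * (p ^ Fintype.card {j // l < e j} - 1) := by
    rw [orderCount_congr f, orderCount_pi_zmod_prime_pow hp]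
  have hC : Nat.card C ∣ orderCount N (p ^ (l + 1)) :=
    hφ.card_dvd_orderCount (Nat.one_lt_pow l.succ_ne_zero hp.one_lt).ne'
  have hpN : p ∣ Nat.card N :=
    (dvd_pow_self p l.succ_ne_zero).trans (hxl ▸ orderOf_dvd_natCard (f.symm x))
  have hdvd := h (f.symm x)
  rw [hxl, hcount, hcard] at hdvd
  rw [hcount] at hC
  have hcard_ne : Fintype.card {j // l < e j} ≠ 0 :=
    have : Nonempty {j // l < e j} := ⟨⟨i, by omega⟩⟩
    Fintype.card_ne_zero
  simpa only [hl, Nat.succ_le_iff] using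
    pow_sub_one_eq_of_dvd_of_dvd hp.pos hcard_ne (hφ.coprime_card.coprime_dvd_left hpN) hC hdvd

theorem exponent_le_of_mulEquiv_pi_zmod [Finite ι] (hφ : IsFixedPointFreeAction φ)
    (h : ∀ x : N, orderCount N (orderOf x) ∣ Nat.card N * Nat.card C) (hp : p.Prime)
    (f : N ≃* ((i : ι) → Multiplicative (ZMod (p ^ e i)))) {i j : ι} (hi : 0 < e i)
    (hj : 0 < e j) : e i ≤ e j := by
  have := Fintype.ofFinite ι
  by_contra! hlt
  have hcard : Fintype.card {l // e i ≤ e l} < Fintype.card {l // e j ≤ e l} := by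
    simp only [Fintype.card_subtype]
    refine Finset.card_lt_card (Finset.ssubset_iff_of_subset ?_ |>.2 ⟨j, by simp [hlt]⟩)
    exact Finset.monotone_filter_right _ fun l _ hl ↦ hlt.le.trans hl
  have hpow := Nat.pow_lt_pow_right hp.one_lt hcard
  have := hφ.prime_pow_sub_one_eq_card h hp f hi
  have := hφ.prime_pow_sub_one_eq_card h hp f hj
  have := Nat.one_le_pow (Fintype.card {l // e i ≤ e l}) p hp.pos
  omega

theorem exists_mulEquiv_pi_zmod_prime_pow [Finite C] [Nontrivial N] [Nontrivial C]
    (hφ : IsFixedPointFreeAction φ)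
    (h : ∀ x : N, orderCount N (orderOf x) ∣ Nat.card N * Nat.card C) :
    ∃ p k r : ℕ, p.Prime ∧ 0 < k ∧ p ^ r = Nat.card C + 1 ∧
      Nonempty (N ≃* (Fin r → Multiplicative (ZMod (p ^ k)))) := by
  obtain ⟨p, s, hp, hcard⟩ := hφ.exists_card_eq_prime_pow h
  obtain ⟨ι, _, e, he, ⟨f⟩⟩ := exists_mulEquiv_pi_zmod_of_card_eq_prime_pow hp hcard
  obtain ⟨i⟩ : Nonempty ι := by
    by_contra! hι
    exact not_subsingleton N f.toEquiv.subsingleton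
  obtain ⟨k, rfl⟩ : ∃ k, e = fun _ ↦ k := ⟨e i, funext fun j ↦ le_antisymm
    (hφ.exponent_le_of_mulEquiv_pi_zmod h hp f (he j) (he i))
    (hφ.exponent_le_of_mulEquiv_pi_zmod h hp f (he i) (he j))⟩
  refine ⟨p, k, Fintype.card ι, hp, he i, ?_,
    ⟨f.trans (MulEquiv.arrowCongr (Fintype.equivFin ι) (MulEquiv.refl _))⟩⟩
  have hC := hφ.prime_pow_sub_one_eq_card (i := i) h hp f (he i)
  simp only [le_refl, Fintype.card_subtype_true] at hC
  have := Nat.one_le_pow (Fintype.card ι) p hp.pos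
  omega

end IsFixedPointFreeAction

end AbelianKernel

section Frobenius

variable {G N C : Type*} [Group G] [Group N] [Group C]

theorem IsFrobeniusWith.isComplement' {K H : Subgroup G} (h : IsFrobeniusWith K H) :
    K.IsComplement' H := by
  obtain ⟨-, -, -, hinf, hmul, -⟩ := h
  refine Subgroup.isComplement'_of_disjoint_and_mul_eq_univ (disjoint_iff.2 hinf) ?_
  refine Set.eq_univ_of_forall fun g ↦ ?_
  obtain ⟨k, hk, c, hc, rfl⟩ := hmul g
  exact Set.mul_mem_mul hk hc

theorem IsFrobeniusWith.isoFrobSdp {K H : Subgroup G} (h : IsFrobeniusWith K H) :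
    IsoFrobSdp G K H := by
  have hc := h.isComplement'
  obtain ⟨-, -, _, -, -, hfree⟩ := h
  exact ⟨_, fun c hc1 x hx1 hcx ↦ hfree c c.2 (by simpa using hc1) x x.2 (by simpa using hx1)
    (congrArg Subtype.val hcx), ⟨(SemidirectProduct.mulEquivSubgroup hc).symm⟩⟩

theorem IsFrobeniusWith.nontrivial_complement {K H : Subgroup G} (h : IsFrobeniusWith K H) :
    Nontrivial H := by
  rw [Subgroup.nontrivial_iff_ne_bot]
  rintro rfl
  exact h.2.1 (Subgroup.isComplement'_bot_right.1 h.isComplement')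

namespace IsoFrobSdp

theorem congr {N' C' : Type*} [Group N'] [Group C'] (h : IsoFrobSdp G N C) (eN : N ≃* N')
    (eC : C ≃* C') : IsoFrobSdp G N' C' := by
  obtain ⟨φ, hφ, ⟨f⟩⟩ := h
  refine ⟨_, fun c hc x hx hcx ↦ ?_, ⟨f.trans (SemidirectProduct.congr' eN eC)⟩⟩
  exact hφ (eC.symm c) (by simpa using hc) (eN.symm x) (by simpa using hx)
    (eN.injective (by simpa using hcx))

theorem exists_of_perfectOrderClasses [Finite N] [Finite C] [Nontrivial N] [Nontrivial C]
    [IsCyclic C] (h : IsoFrobSdp G N C) (hG : PerfectOrderClasses G) :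
    ∃ p k r a b : ℕ, p.Prime ∧ 0 < k ∧ 0 < a ∧ Nat.card C = 2 ^ a * 3 ^ b ∧
      p ^ r = Nat.card C + 1 ∧ Nonempty (N ≃* (Fin r → Multiplicative (ZMod (p ^ k)))) := by
  obtain ⟨φ, hφ : IsFixedPointFreeAction φ, ⟨f⟩⟩ := h
  obtain ⟨hN, hC⟩ := hφ.perfectOrderClasses_iff.1 ((perfectOrderClasses_congr f).1 hG)
  rw [perfectOrderClasses_iff_totient_dvd, totient_dvd_self_iff Finite.one_lt_card] at hC
  obtain ⟨a, b, ha, hab⟩ := hC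
  have heven : Even (Nat.card C) := hab ▸ even_two_pow_mul_three_pow_iff.2 ha
  let _ : CommGroup N :=
    { ‹Group N› with mul_comm := fun x y ↦ (hφ.commute_of_even_card heven x y).eq }
  obtain ⟨p, k, r, hp, hk, hr, hiso⟩ := hφ.exists_mulEquiv_pi_zmod_prime_pow hN
  exact ⟨p, k, r, a, b, hp, hk, ha, hab, hr, hiso⟩

theorem perfectOrderClasses [Finite C] [IsCyclic C] {ι : Type*} [Fintype ι] {p k a b : ℕ}
    (h : IsoFrobSdp G (ι → Multiplicative (ZMod (p ^ k))) C) (hp : p.Prime) (ha : 0 < a)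
    (hC : Nat.card C = 2 ^ a * 3 ^ b) (hr : p ^ Fintype.card ι = Nat.card C + 1) :
    PerfectOrderClasses G := by
  have : NeZero p := ⟨hp.ne_zero⟩
  obtain ⟨φ, hφ : IsFixedPointFreeAction φ, ⟨f⟩⟩ := h
  refine (perfectOrderClasses_congr f).2 (hφ.perfectOrderClasses_iff.2 ⟨fun x ↦ ?_, ?_⟩)
  · simpa [hr] using orderCount_orderOf_pi_zmod_dvd hp k x
  · rw [perfectOrderClasses_iff_totient_dvd, hC]
    exact totient_two_pow_mul_three_pow_dvd ha b

end IsoFrobSdp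

end Frobenius

/-- Frobenius groups with cyclic complement and perfect order classes. -/
theorem frobenius_cyclic_complement_perfectOrderClasses_iff
    {G : Type*} [Group G] [Fintype G] (K H : Subgroup G)
    (hFrob : IsFrobeniusWith K H) (hcyc : IsCyclic H) :
    PerfectOrderClasses G ↔
      (∃ p k : ℕ, p.Prime ∧ Odd p ∧ 0 < k ∧
          Nonempty (K ≃* Multiplicative (ZMod (p ^ k))) ∧
          p = 1 + Nat.card H ∧
          Even (Nat.card H) ∧ 0 < Nat.card H ∧
          ∃ a b : ℕ, Nat.card H = 2 ^ a * 3 ^ b) ∨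
      (∃ k : ℕ, 0 < k ∧
        (IsoFrobSdp G (Fin 2 → Multiplicative (ZMod (3 ^ k))) (Multiplicative (ZMod 8)) ∨
          IsoFrobSdp G (Fin 2 → Multiplicative (ZMod (5 ^ k))) (Multiplicative (ZMod 24)) ∨
          IsoFrobSdp G (Fin 2 → Multiplicative (ZMod (7 ^ k))) (Multiplicative (ZMod 48)) ∨
          IsoFrobSdp G (Fin 2 → Multiplicative (ZMod (17 ^ k)))
            (Multiplicative (ZMod 288)))) := by
  have hsdp := hFrob.isoFrobSdp
  have : Nontrivial K := (Subgroup.nontrivial_iff_ne_bot K).2 hFrob.1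
  have : Nontrivial H := hFrob.nontrivial_complement
  constructor
  · intro hG
    obtain ⟨p, k, r, a, b, hp, hk, ha, hab, hr, ⟨f⟩⟩ := hsdp.exists_of_perfectOrderClasses hG
    have heven : Even (Nat.card H) := hab ▸ even_two_pow_mul_three_pow_iff.2 ha
    rcases prime_pow_eq_two_pow_mul_three_pow_add_one hp ha (hab ▸ hr) with rfl | ⟨rfl, hp4⟩
    · obtain rfl : p = Nat.card H + 1 := by simpa using hr
      exact .inl ⟨_, k, hp, heven.add_one, hk, ⟨f.trans (MulEquiv.funUnique (Fin 1) _)⟩,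
        add_comm _ _, heven, Nat.card_pos, a, b, hab⟩
    · have hiso := hsdp.congr f (zmodCyclicMulEquiv hcyc).symm
      rw [show Nat.card H = p ^ 2 - 1 by omega] at hiso
      refine .inr ⟨k, hk, ?_⟩
      rcases hp4 with rfl | rfl | rfl | rfl
      exacts [.inl hiso, .inr (.inl hiso), .inr (.inr (.inl hiso)), .inr (.inr (.inr hiso))]
  · rintro (⟨p, k, hp, -, -, ⟨f⟩, hpH, heven, -, a, b, hab⟩ | ⟨k, -, h | h | h | h⟩)
    · have ha : 0 < a := even_two_pow_mul_three_pow_iff.1 (hab ▸ heven)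
      have hiso := hsdp.congr (f.trans (MulEquiv.funUnique (Fin 1) _).symm) (.refl H)
      exact hiso.perfectOrderClasses hp ha hab (by rw [Fintype.card_fin, pow_one]; omega)
    · exact h.perfectOrderClasses (a := 3) (b := 0) (by norm_num) (by simp) (by simp) (by simp)
    · exact h.perfectOrderClasses (a := 3) (b := 1) (by norm_num) (by simp) (by simp) (by simp)
    · exact h.perfectOrderClasses (a := 4) (b := 1) (by norm_num) (by simp) (by simp) (by simp)
    · exact h.perfectOrderClasses (a := 5) (b := 2) (by norm_num) (by simp) (by simp) (by simp)
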